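/- Let m ≥ 1, let p be a positive divisor of m, and write c := m/p. Suppose that q ≠ −a/b for all integers a, b with 1 ≤ a ≤ 2 ≤ b (equivalently, a + q·b ≠ 0 for all such a, b). Then the polynomials {x^α y^β : 0 ≤ α < m, 0 ≤ β < m, min(α,β) < c} ∪ {⟨β+m⟩_m · x^{α+m} y^β − ⟨α+m⟩_m · x^α y^{β+m} : 0 ≤ α < c, 0 ≤ β < c} form a K-basis of the space H_q(G(m,p,2)) := {f ∈ K[x,y] : D_{q,m} f = 0, D_{q,2m} f = 0, (∂_x∂_y)^c f = 0} of q-harmonic polynomials for G(m,p,2). In particular this space has dimension 2m²/p, the order of the group G(m,p,2). -/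

import Mathlib

open MvPolynomial

/-- The deformed operator `D_{q,k} = (1 + q x∂_x)∂_x^k + (1 + q y∂_y)∂_y^k` on `K[x,y]`,
with `x = X 0` and `y = X 1`. -/
noncomputable def D2 {K : Type*} [Field K] (q : K) (k : ℕ) :
    Module.End K (MvPolynomial (Fin 2) K) :=
  (1 + q • (LinearMap.mulLeft K (X 0) * (pderiv 0).toLinearMap)) *
      ((pderiv (0 : Fin 2)).toLinearMap : Module.End K (MvPolynomial (Fin 2) K)) ^ k
    + (1 + q • (LinearMap.mulLeft K (X 1) * (pderiv 1).toLinearMap)) *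
        ((pderiv (1 : Fin 2)).toLinearMap : Module.End K (MvPolynomial (Fin 2) K)) ^ k

/-- The deformed Pochhammer symbol `⟨d⟩_k = d(d-1)⋯(d-k+1)(1 + q(d-k))`. -/
noncomputable def tp {K : Type*} [Field K] (q : K) (d k : ℕ) : K :=
  (∏ i ∈ Finset.range k, ((d : K) - (i : K))) * (1 + q * ((d : K) - (k : K)))
/-- The claimed basis of the `q`-harmonic polynomials for `G(m,p,2)`, where `c = m/p`:
the monomials `x^α y^β` with `0 ≤ α, β < m` and `min(α,β) < c`, together with the
binomials `⟨β+m⟩_m x^{α+m} y^β − ⟨α+m⟩_m x^α y^{β+m}` with `0 ≤ α, β < c`. -/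
noncomputable def basisGmp2 {K : Type*} [Field K] (q : K) (m c : ℕ) :
    ({ab : Fin m × Fin m // min (ab.1 : ℕ) (ab.2 : ℕ) < c} ⊕ (Fin c × Fin c)) →
      MvPolynomial (Fin 2) K :=
  Sum.elim
    (fun ab => (X 0 : MvPolynomial (Fin 2) K) ^ (ab.1.1 : ℕ) * X 1 ^ (ab.1.2 : ℕ))
    (fun ab =>
      tp q ((ab.2 : ℕ) + m) m •
          ((X 0 : MvPolynomial (Fin 2) K) ^ ((ab.1 : ℕ) + m) * X 1 ^ (ab.2 : ℕ))
        - tp q ((ab.1 : ℕ) + m) m •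
            ((X 0 : MvPolynomial (Fin 2) K) ^ (ab.1 : ℕ) * X 1 ^ ((ab.2 : ℕ) + m)))

section Helpers

lemma coeff_pderiv_pow {K : Type*} [Field K] (i : Fin 2) (k : ℕ) :
    ∀ (n : Fin 2 →₀ ℕ) (f : MvPolynomial (Fin 2) K),
    coeff n ((((pderiv i).toLinearMap : Module.End K (MvPolynomial (Fin 2) K)) ^ k) f)
      = (∏ j ∈ Finset.range k, (((n i + k : ℕ) : K) - (j : K)))
          * coeff (n + Finsupp.single i k) f := by
  induction k with
  | zero => intro n f; simp
  | succ k ih =>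
    intro n f
    rw [pow_succ, Module.End.mul_apply, ih, Finset.prod_range_succ']
    have h : coeff (n + Finsupp.single i k) ((pderiv i).toLinearMap f)
        = coeff (n + Finsupp.single i (k+1)) f * ((n i : K) + k + 1) := by
      have := coeff_pderiv (i := i) f (n + Finsupp.single i k)
      rw [add_assoc, ← Finsupp.single_add] at this
      simpa using this
    rw [h]
    have h2 : ∀ j : ℕ, (((n i + (k+1) : ℕ) : K) - ((j+1 : ℕ) : K)) = ((n i + k : ℕ) : K) - j := by
      intro j; push_cast; ring
    simp only [h2]
    push_cast
    ring

lemma coeff_euler {K : Type*} [Field K] (i : Fin 2) (n : Fin 2 →₀ ℕ)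
    (f : MvPolynomial (Fin 2) K) :
    coeff n (X i * pderiv i f) = (n i : K) * coeff n f := by
  rw [coeff_X_mul']
  split_ifs with h
  · rw [coeff_pderiv]
    have h1 : 1 ≤ n i := by
      have := Finsupp.mem_support_iff.mp h
      omega
    have h2 : n - Finsupp.single i 1 + Finsupp.single i 1 = n := by
      apply tsub_add_cancel_of_le
      simpa using h1
    rw [h2]
    have h3 : (((n - Finsupp.single i 1 : Fin 2 →₀ ℕ) i : ℕ) : K) + 1 = n i := by
      have : (n - Finsupp.single i 1 : Fin 2 →₀ ℕ) i + 1 = n i := by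
        simp; omega
      have h4 := congrArg (Nat.cast : ℕ → K) this
      rwa [Nat.cast_add, Nat.cast_one] at h4
    rw [h3, mul_comm]
  · have : n i = 0 := by simpa using h
    simp [this]

lemma coeff_D2 {K : Type*} [Field K] (q : K) (k : ℕ) (n : Fin 2 →₀ ℕ)
    (f : MvPolynomial (Fin 2) K) :
    coeff n (D2 q k f) = tp q (n 0 + k) k * coeff (n + Finsupp.single 0 k) f
      + tp q (n 1 + k) k * coeff (n + Finsupp.single 1 k) f := by
  have key : ∀ i : Fin 2, coeff n (((1 + q • (LinearMap.mulLeft K (X i) * (pderiv i).toLinearMap)) *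
      ((pderiv i).toLinearMap : Module.End K (MvPolynomial (Fin 2) K)) ^ k :
      Module.End K (MvPolynomial (Fin 2) K)) f)
      = tp q (n i + k) k * coeff (n + Finsupp.single i k) f := by
    intro i
    rw [Module.End.mul_apply, LinearMap.add_apply, coeff_add, LinearMap.smul_apply, coeff_smul,
      Module.End.mul_apply, LinearMap.mulLeft_apply, Module.End.one_apply]
    have := coeff_euler i n ((((pderiv i).toLinearMap : Module.End K (MvPolynomial (Fin 2) K)) ^ k) f)
    erw [this]
    rw [coeff_pderiv_pow]
    simp only [tp, smul_eq_mul]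
    push_cast
    ring
  rw [D2, LinearMap.add_apply, coeff_add, key, key]

lemma coeff_T {K : Type*} [Field K] [CharZero K] (c : ℕ) :
    ∀ n : Fin 2 →₀ ℕ, ∃ P : K, P ≠ 0 ∧ ∀ f : MvPolynomial (Fin 2) K,
    coeff n ((((pderiv 0).toLinearMap * (pderiv 1).toLinearMap :
              Module.End K (MvPolynomial (Fin 2) K)) ^ c) f)
      = P * coeff (n + Finsupp.single 0 c + Finsupp.single 1 c) f := by
  induction c with
  | zero => intro n; exact ⟨1, one_ne_zero, by simp⟩
  | succ c ih =>
    intro n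
    obtain ⟨P, hP, h⟩ := ih n
    refine ⟨P * (((n 0 + c + 1 : ℕ) : K) * ((n 1 + c + 1 : ℕ) : K)), ?_, ?_⟩
    · refine mul_ne_zero hP (mul_ne_zero ?_ ?_) <;> exact Nat.cast_ne_zero.mpr (by omega)
    · intro f
      rw [pow_succ, Module.End.mul_apply, h, Module.End.mul_apply]
      have h1 : coeff (n + Finsupp.single 0 c + Finsupp.single 1 c)
          (pderiv (0 : Fin 2) (pderiv (1 : Fin 2) f))
          = coeff (n + Finsupp.single 0 (c+1) + Finsupp.single 1 (c+1)) f
            * ((n 1 : K) + c + 1) * ((n 0 : K) + c + 1) := by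
        rw [coeff_pderiv, coeff_pderiv]
        have : n + Finsupp.single 0 c + Finsupp.single 1 c + Finsupp.single 0 1
            + Finsupp.single 1 1 = n + Finsupp.single 0 (c+1) + Finsupp.single 1 (c+1) := by
          rw [Finsupp.single_add, Finsupp.single_add]; abel
        rw [this]
        simp
      erw [h1]
      push_cast
      ring

/-- exponent vector -/
noncomputable def ev (a b : ℕ) : Fin 2 →₀ ℕ := Finsupp.single 0 a + Finsupp.single 1 b

lemma ev_zero (a b : ℕ) : ev a b 0 = a := by simp [ev]
lemma ev_one (a b : ℕ) : ev a b 1 = b := by simp [ev]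
lemma ev_add0 (a b k : ℕ) : ev a b + Finsupp.single 0 k = ev (a+k) b := by
  simp only [ev, Finsupp.single_add]; abel
lemma ev_add1 (a b k : ℕ) : ev a b + Finsupp.single 1 k = ev a (b+k) := by
  simp only [ev, Finsupp.single_add]; abel
lemma ev_eta (n : Fin 2 →₀ ℕ) : ev (n 0) (n 1) = n := by
  ext i; fin_cases i <;> simp [ev]
lemma ev_inj (a b a' b' : ℕ) : ev a b = ev a' b' ↔ a = a' ∧ b = b' := by
  constructor
  · intro h
    have h0 := DFunLike.congr_fun h 0
    have h1 := DFunLike.congr_fun h 1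
    rw [ev_zero, ev_zero] at h0
    rw [ev_one, ev_one] at h1
    exact ⟨h0, h1⟩
  · rintro ⟨rfl, rfl⟩; rfl

lemma poly_ext {K : Type*} [Field K] {f g : MvPolynomial (Fin 2) K}
    (h : ∀ a b, coeff (ev a b) f = coeff (ev a b) g) : f = g := by
  ext n
  rw [← ev_eta n]; exact h _ _

lemma coeff_mono {K : Type*} [Field K] (a b a' b' : ℕ) :
    coeff (ev a b) ((X 0 : MvPolynomial (Fin 2) K) ^ a' * X 1 ^ b')
      = if a = a' ∧ b = b' then 1 else 0 := by
  have : (X 0 : MvPolynomial (Fin 2) K) ^ a' * X 1 ^ b' = monomial (ev a' b') 1 := by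
    rw [X_pow_eq_monomial, X_pow_eq_monomial, monomial_mul, one_mul, ev]
  rw [this, coeff_monomial]
  refine if_congr ?_ rfl rfl
  rw [ev_inj, eq_comm, eq_comm (a := b)]

lemma mem_D2 {K : Type*} [Field K] (q : K) (k : ℕ) (f : MvPolynomial (Fin 2) K) :
    f ∈ LinearMap.ker (D2 q k) ↔ ∀ a b : ℕ, tp q (a + k) k * coeff (ev (a + k) b) f
      + tp q (b + k) k * coeff (ev a (b + k)) f = 0 := by
  rw [LinearMap.mem_ker]
  have h : ∀ a b : ℕ, coeff (ev a b) (D2 q k f) = tp q (a + k) k * coeff (ev (a + k) b) f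
      + tp q (b + k) k * coeff (ev a (b + k)) f := by
    intro a b
    rw [coeff_D2, ev_zero, ev_one, ev_add0, ev_add1]
  constructor
  · intro h0 a b
    rw [← h, h0, coeff_zero]
  · intro h0
    apply poly_ext
    intro a b
    rw [h, h0, coeff_zero]

lemma mem_T {K : Type*} [Field K] [CharZero K] (c : ℕ) (f : MvPolynomial (Fin 2) K) :
    f ∈ LinearMap.ker (((pderiv 0).toLinearMap * (pderiv 1).toLinearMap :
              Module.End K (MvPolynomial (Fin 2) K)) ^ c) ↔
      ∀ a b : ℕ, coeff (ev (a + c) (b + c)) f = 0 := by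
  rw [LinearMap.mem_ker]
  constructor
  · intro h0 a b
    obtain ⟨P, hP, h⟩ := coeff_T (K := K) c (ev a b)
    have := h f
    rw [h0, coeff_zero, ev_add0, ev_add1] at this
    exact (mul_eq_zero.mp this.symm).resolve_left hP
  · intro h0
    apply poly_ext
    intro a b
    obtain ⟨P, hP, h⟩ := coeff_T (K := K) c (ev a b)
    rw [h, ev_add0, ev_add1, h0, mul_zero, coeff_zero]

lemma tp_ne {K : Type*} [Field K] [CharZero K] (q : K)
    (hq : ∀ a b : ℕ, 1 ≤ a → a ≤ 2 → 2 ≤ b → (a : K) + q * (b : K) ≠ 0) (a k : ℕ) :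
    tp q (a + k) k ≠ 0 := by
  unfold tp
  refine mul_ne_zero ?_ ?_
  · rw [Finset.prod_ne_zero_iff]
    intro i hi
    have := Finset.mem_range.mp hi
    rw [sub_ne_zero]
    intro h
    have : a + k = i := by exact_mod_cast h
    omega
  · have : ((a + k : ℕ) : K) - k = a := by push_cast; ring
    rw [this]
    rcases a with _ | _ | a
    · simp
    · intro h
      apply hq 2 2 (by norm_num) (by norm_num) (by norm_num)
      push_cast at h ⊢
      linear_combination 2 * h
    · have := hq 1 (a+2) (by norm_num) (by norm_num) (by omega)
      push_cast at this ⊢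
      intro h
      apply this
      linear_combination h

/-- dual exponents -/
noncomputable def dualExp (m c : ℕ) :
    ({ab : Fin m × Fin m // min (ab.1 : ℕ) (ab.2 : ℕ) < c} ⊕ (Fin c × Fin c)) → (Fin 2 →₀ ℕ) :=
  Sum.elim (fun ab => ev ab.1.1 ab.1.2) (fun ab => ev (ab.1 + m) ab.2)

lemma dual_diag {K : Type*} [Field K] [CharZero K] (q : K) (m c : ℕ)
    (hm : 1 ≤ m)
    (hq : ∀ a b : ℕ, 1 ≤ a → a ≤ 2 → 2 ≤ b → (a : K) + q * (b : K) ≠ 0) (i) :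
    coeff (dualExp m c i) (basisGmp2 q m c i) ≠ 0 := by
  rcases i with i | i
  · simp [dualExp, basisGmp2, coeff_mono]
  · simp only [dualExp, basisGmp2, Sum.elim_inr, coeff_sub, coeff_smul, coeff_mono]
    rw [if_pos (by simp), if_neg (by omega)]
    simpa using tp_ne q hq i.2 m

lemma dual_off {K : Type*} [Field K] [CharZero K] (q : K) (m c : ℕ) (hcm : c ≤ m) (i j)
    (hij : i ≠ j) :
    coeff (dualExp m c i) (basisGmp2 q m c j) = 0 := by
  rcases i with ⟨⟨⟨i1, hi1⟩, ⟨i2, hi2⟩⟩, hi⟩ | ⟨⟨i1, hi1⟩, ⟨i2, hi2⟩⟩ <;>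
  rcases j with ⟨⟨⟨j1, hj1⟩, ⟨j2, hj2⟩⟩, hj⟩ | ⟨⟨j1, hj1⟩, ⟨j2, hj2⟩⟩ <;>
  simp only [dualExp, basisGmp2, Sum.elim_inr, Sum.elim_inl, coeff_sub, coeff_smul, coeff_mono]
  · rw [if_neg]; simpa using hij
  · rw [if_neg (by omega), if_neg (by omega)]; simp
  · rw [if_neg (by omega)]
  · have : ¬ (i1 = j1 ∧ i2 = j2) := by simpa using hij
    rw [if_neg (by omega), if_neg (by omega)]; simp

lemma basis_mem {K : Type*} [Field K] [CharZero K] (q : K) (m c : ℕ) (hm : 1 ≤ m)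
    (hcm : c ≤ m) (i) :
    basisGmp2 q m c i ∈ LinearMap.ker (D2 q m) ⊓ LinearMap.ker (D2 q (2 * m)) ⊓
            LinearMap.ker (((pderiv 0).toLinearMap * (pderiv 1).toLinearMap :
              Module.End K (MvPolynomial (Fin 2) K)) ^ c) := by
  rw [Submodule.mem_inf, Submodule.mem_inf, mem_D2, mem_D2, mem_T]
  rcases i with ⟨⟨⟨i1, hi1⟩, ⟨i2, hi2⟩⟩, hi⟩ | ⟨⟨i1, hi1⟩, ⟨i2, hi2⟩⟩ <;>
  refine ⟨⟨?_, ?_⟩, ?_⟩ <;> intro a b <;>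
  simp only [basisGmp2, Sum.elim_inr, Sum.elim_inl, coeff_sub, coeff_smul, coeff_mono]
  · simp only at hi
    rw [if_neg (by omega), if_neg (by omega)]; simp
  · simp only at hi
    rw [if_neg (by omega), if_neg (by omega)]; simp
  · simp only at hi
    rw [if_neg (by omega)]
  · by_cases h : a = i1 ∧ b = i2
    · obtain ⟨rfl, rfl⟩ := h
      rw [if_pos (by omega), if_neg (by omega), if_neg (by omega), if_pos (by omega)]
      simp only [smul_eq_mul]; ring
    · rw [if_neg (by omega), if_neg (by omega), if_neg (by omega), if_neg (by omega)]; simp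
  · rw [if_neg (by omega), if_neg (by omega), if_neg (by omega), if_neg (by omega)]; simp
  · rw [if_neg (by omega), if_neg (by omega)]; simp

lemma kernel_zero {K : Type*} [Field K] [CharZero K] (q : K) (m c : ℕ)
    (hcm : c ≤ m)
    (hq : ∀ a b : ℕ, 1 ≤ a → a ≤ 2 → 2 ≤ b → (a : K) + q * (b : K) ≠ 0)
    (f : MvPolynomial (Fin 2) K)
    (hf : f ∈ LinearMap.ker (D2 q m) ⊓ LinearMap.ker (D2 q (2 * m)) ⊓
            LinearMap.ker (((pderiv 0).toLinearMap * (pderiv 1).toLinearMap :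
              Module.End K (MvPolynomial (Fin 2) K)) ^ c))
    (h0 : ∀ i, coeff (dualExp m c i) f = 0) : f = 0 := by
  rw [Submodule.mem_inf, Submodule.mem_inf, mem_D2, mem_D2, mem_T] at hf
  obtain ⟨⟨h1, -⟩, h3⟩ := hf
  have h3' : ∀ a b, c ≤ a → c ≤ b → coeff (ev a b) f = 0 := by
    intro a b ha hb
    have := h3 (a - c) (b - c)
    rwa [Nat.sub_add_cancel ha, Nat.sub_add_cancel hb] at this
  -- right strip
  have hx : ∀ a b, coeff (ev (a + m) b) f = 0 := by
    intro a b
    by_cases hb : c ≤ b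
    · exact h3' _ _ (by omega) hb
    by_cases ha : c ≤ a
    · have := h1 a b
      rw [h3' a (b + m) ha (by omega), mul_zero, add_zero] at this
      exact (mul_eq_zero.mp this).resolve_left (tp_ne q hq a m)
    · exact h0 (Sum.inr (⟨a, by omega⟩, ⟨b, by omega⟩))
  have hy : ∀ a b, coeff (ev a (b + m)) f = 0 := by
    intro a b
    have := h1 a b
    rw [hx, mul_zero, zero_add] at this
    exact (mul_eq_zero.mp this).resolve_left (tp_ne q hq b m)
  apply poly_ext
  intro a b
  rw [coeff_zero]
  by_cases ha : m ≤ a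
  · have := hx (a - m) b
    rwa [Nat.sub_add_cancel ha] at this
  by_cases hb : m ≤ b
  · have := hy a (b - m)
    rwa [Nat.sub_add_cancel hb] at this
  by_cases hc : min a b < c
  · exact h0 (Sum.inl ⟨(⟨a, by omega⟩, ⟨b, by omega⟩), hc⟩)
  · exact h3' _ _ (by omega) (by omega)

lemma card_index (m c : ℕ) (hcm : c ≤ m) :
    Fintype.card ({ab : Fin m × Fin m // min (ab.1 : ℕ) (ab.2 : ℕ) < c} ⊕ (Fin c × Fin c))
      = 2 * m * c := by
  obtain ⟨d, rfl⟩ := Nat.exists_eq_add_of_le hcm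
  have hF : (Finset.univ.filter (fun a : Fin (c + d) => c ≤ (a : ℕ))).card = d := by
    have := Fin.card_filter_val_lt (n := c + d) (m := c)
    have h2 := Finset.card_filter_add_card_filter_not (s := (Finset.univ : Finset (Fin (c+d))))
      (fun a : Fin (c + d) => (a : ℕ) < c)
    simp only [not_lt, Finset.card_univ, Fintype.card_fin] at h2
    simp only [this] at h2
    omega
  have h2 := Finset.card_filter_add_card_filter_not
    (s := (Finset.univ : Finset (Fin (c+d) × Fin (c+d))))
    (fun ab => min (ab.1 : ℕ) (ab.2 : ℕ) < c)
  have h3 : (Finset.univ.filter (fun ab : Fin (c+d) × Fin (c+d) =>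
      ¬ min (ab.1 : ℕ) (ab.2 : ℕ) < c)) =
      (Finset.univ.filter (fun a : Fin (c + d) => c ≤ (a : ℕ))) ×ˢ
      (Finset.univ.filter (fun a : Fin (c + d) => c ≤ (a : ℕ))) := by
    ext ⟨a, b⟩; simp
  rw [h3, Finset.card_product, hF, Finset.card_univ, Fintype.card_prod, Fintype.card_fin] at h2
  rw [Fintype.card_sum, Fintype.card_subtype, Fintype.card_prod, Fintype.card_fin]
  nlinarith [h2]

end Helpers

/-- For `p` a positive divisor of `m`, `c = m/p`, and `q ≠ -a/b` with `1 ≤ a ≤ 2 ≤ b`,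
the polynomials of `basisGmp2` form a basis of the `q`-harmonic polynomials for
`G(m,p,2)` (cut out by `D_{q,m}`, `D_{q,2m}` and `(∂_x∂_y)^c`); in particular that space
has dimension `2m²/p`, the order of `G(m,p,2)`. -/
theorem basis_qHarmonic_Gmp2 {K : Type*} [Field K] [CharZero K] (q : K)
    (m p : ℕ) (hm : 1 ≤ m) (hp : 1 ≤ p) (hpm : p ∣ m)
    (hq : ∀ a b : ℕ, 1 ≤ a → a ≤ 2 → 2 ≤ b → (a : K) + q * (b : K) ≠ 0) :
    LinearIndependent K (basisGmp2 (K := K) q m (m / p))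
    ∧ Submodule.span K (Set.range (basisGmp2 (K := K) q m (m / p)))
        = LinearMap.ker (D2 q m) ⊓ LinearMap.ker (D2 q (2 * m)) ⊓
            LinearMap.ker (((pderiv 0).toLinearMap * (pderiv 1).toLinearMap :
              Module.End K (MvPolynomial (Fin 2) K)) ^ (m / p))
    ∧ Module.finrank K
        ↥(LinearMap.ker (D2 q m) ⊓ LinearMap.ker (D2 q (2 * m)) ⊓
            LinearMap.ker (((pderiv 0).toLinearMap * (pderiv 1).toLinearMap :
              Module.End K (MvPolynomial (Fin 2) K)) ^ (m / p)))
        = 2 * m ^ 2 / p := by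
  have hcm : m / p ≤ m := Nat.div_le_self m p
  have hmc : 2 * m * (m / p) = 2 * m ^ 2 / p := by
    obtain ⟨k, rfl⟩ := hpm
    have hp0 : 0 < p := hp
    rw [Nat.mul_div_cancel_left _ hp0]
    symm
    apply Nat.div_eq_of_eq_mul_left hp0
    ring
  generalize m / p = c at *
  have hli : LinearIndependent K (basisGmp2 (K := K) q m c) := by
    rw [Fintype.linearIndependent_iff]
    intro g hg i
    have h := congrArg (coeff (dualExp m c i)) hg
    rw [coeff_sum, coeff_zero, Finset.sum_eq_single i, coeff_smul, smul_eq_mul] at h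
    · exact (mul_eq_zero.mp h).resolve_right (dual_diag q m c hm hq i)
    · intro j _ hj
      rw [coeff_smul, dual_off q m c hcm i j hj.symm, smul_zero]
    · intro h; exact absurd (Finset.mem_univ i) h
  have hspan : Submodule.span K (Set.range (basisGmp2 (K := K) q m c))
        = LinearMap.ker (D2 q m) ⊓ LinearMap.ker (D2 q (2 * m)) ⊓
            LinearMap.ker (((pderiv 0).toLinearMap * (pderiv 1).toLinearMap :
              Module.End K (MvPolynomial (Fin 2) K)) ^ c) := by
    have hle : Submodule.span K (Set.range (basisGmp2 (K := K) q m c)) ≤ _ :=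
      Submodule.span_le.mpr (Set.range_subset_iff.mpr (basis_mem q m c hm hcm))
    apply le_antisymm hle
    intro f hf
    set g : MvPolynomial (Fin 2) K := ∑ i, (coeff (dualExp m c i) f /
      coeff (dualExp m c i) (basisGmp2 (K := K) q m c i)) • basisGmp2 (K := K) q m c i with hg
    have hgm : g ∈ Submodule.span K (Set.range (basisGmp2 (K := K) q m c)) :=
      Submodule.sum_mem _ fun i _ => Submodule.smul_mem _ _ (Submodule.subset_span ⟨i, rfl⟩)
    have hfg : f - g = 0 := by
      apply kernel_zero q m c hcm hq _ (Submodule.sub_mem _ hf (hle hgm))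
      intro i
      rw [coeff_sub, hg, coeff_sum, Finset.sum_eq_single i, coeff_smul, smul_eq_mul,
        div_mul_cancel₀ _ (dual_diag q m c hm hq i), sub_self]
      · intro j _ hj
        rw [coeff_smul, dual_off q m c hcm i j hj.symm, smul_zero]
      · intro h; exact absurd (Finset.mem_univ i) h
    rw [sub_eq_zero.mp hfg]
    exact hgm
  refine ⟨hli, hspan, ?_⟩
  rw [← hspan, finrank_span_eq_card hli, card_index m c hcm, hmc]
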